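/- Let n ≥ 1, d ∈ ℝ^n with d > 0 entrywise, and y ∈ ℝ^n. Then the cardinality of the image of the extreme point map E_{d,y} satisfies |{ E_{d,y}(σ) : σ ∈ S_n }| ≤ n! + 1 − |Stab(y/d)|, where Stab(y/d) := { σ ∈ S_n : (y_{σ(i)}/d_{σ(i)})_{i=1}^n = (y_i/d_i)_{i=1}^n } is the stabilizer of the vector (y_i/d_i)_{i=1}^n under the permutation action of S_n. -/

import Mathlib

open Finset

noncomputable def th {n : ℕ} (d y : Fin n → ℝ) (c : ℝ) : ℝ :=
  sInf ((fun i => (∑ j, max (y j - y i / d i * d j) 0) + y i / d i * c) ''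
    {i : Fin n | 0 < d i})

noncomputable def psum {n : ℕ} (d : Fin n → ℝ) (σ : Equiv.Perm (Fin n)) (j : ℕ) : ℝ :=
  ∑ i ∈ Finset.univ.filter (fun i : Fin n => (i : ℕ) < j), d (σ i)

noncomputable def Emap {n : ℕ} (d y : Fin n → ℝ) (σ : Equiv.Perm (Fin n)) : Fin n → ℝ :=
  fun k => th d y (psum d σ ((σ.symm k : ℕ) + 1)) - th d y (psum d σ (σ.symm k : ℕ))

def dStoch {n : ℕ} (d : Fin n → ℝ) (A : Matrix (Fin n) (Fin n) ℝ) : Prop :=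
  (∀ i j, 0 ≤ A i j) ∧ (∀ j, ∑ i, A i j = 1) ∧ A.mulVec d = d

def Mset {n : ℕ} (d y : Fin n → ℝ) : Set (Fin n → ℝ) :=
  {x | ∃ A : Matrix (Fin n) (Fin n) ℝ, dStoch d A ∧ A.mulVec y = x}

noncomputable def Aentry {n : ℕ} (d : Fin n → ℝ) (σ τ : Equiv.Perm (Fin n))
    (α : ℕ → Fin n) (j k : Fin n) : ℝ :=
  if k = α j.val ∧ (α j.val).val < (α (j.val + 1)).val then
    (psum d τ ((α j.val).val + 1) - psum d σ j.val) / d (τ (α j.val))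
  else if (α j.val).val < k.val ∧ k.val < (α (j.val + 1)).val then 1
  else if (α j.val).val < (α (j.val + 1)).val ∧ k = α (j.val + 1) then
    (psum d σ (j.val + 1) - psum d τ (α (j.val + 1)).val) / d (τ (α (j.val + 1)))
  else if α j.val = α (j.val + 1) ∧ k = α (j.val + 1) then
    d (σ j) / d (τ (α (j.val + 1)))
  else 0

noncomputable def Amat {n : ℕ} (d : Fin n → ℝ) (σ τ : Equiv.Perm (Fin n))
    (α : ℕ → Fin n) : Matrix (Fin n) (Fin n) ℝ :=
  Matrix.of fun p q => Aentry d σ τ α (σ.symm p) (τ.symm q)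

/-!
If `π` lists the indices in order of nonincreasing slopes `y i / d i`, then at the partial sums of
`d ∘ π` the minimum defining the thermomajorization curve is attained at the slope of the adjacent
index, where the curve has the value of the corresponding partial sum of `y ∘ π`. Taking increments,
`Emap d y π = y`. Composing one such `π` with the stabilizer of `y / d` gives `|Stab|` permutations
that all share the value `y`, while the remaining `n! - |Stab|` contribute at most one value each.
-/

section SumMax

variable {ι M : Type*} [Fintype ι] [AddCommMonoid M] [LinearOrder M]

lemma sum_max_zero_eq_sum {s : Finset ι} {z : ι → M} (hs : ∀ i ∈ s, 0 ≤ z i)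
    (hsc : ∀ i ∉ s, z i ≤ 0) : ∑ i, max (z i) 0 = ∑ i ∈ s, z i :=
  calc
    ∑ i, max (z i) 0 = ∑ i ∈ s, max (z i) 0 :=
      (sum_subset (subset_univ s) fun i _ hi => max_eq_right (hsc i hi)).symm
    _ = ∑ i ∈ s, z i := sum_congr rfl fun i hi => max_eq_left (hs i hi)

lemma sum_le_sum_max_zero [IsOrderedAddMonoid M] (s : Finset ι) (z : ι → M) :
    ∑ i ∈ s, z i ≤ ∑ i, max (z i) 0 :=
  calc
    ∑ i ∈ s, z i ≤ ∑ i ∈ s, max (z i) 0 := sum_le_sum fun _ _ => le_max_left _ _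
    _ ≤ ∑ i, max (z i) 0 :=
      sum_le_sum_of_subset_of_nonneg (subset_univ s) fun _ _ _ => le_max_right _ _

end SumMax

lemma ncard_range_add_ncard_le_card_add_one {α β : Type*} [Finite α] {f : α → β} {T : Set α}
    {b : β} (hT : ∀ a ∈ T, f a = b) : (Set.range f).ncard + T.ncard ≤ Nat.card α + 1 := by
  have range_subset : Set.range f ⊆ insert b (f '' Tᶜ) := by
    rintro _ ⟨a, rfl⟩
    by_cases ha : a ∈ T
    · exact Or.inl (hT a ha)
    · exact Or.inr ⟨a, ha, rfl⟩
  calc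
    (Set.range f).ncard + T.ncard ≤ (insert b (f '' Tᶜ)).ncard + T.ncard := by
      gcongr
      exact Set.toFinite _
    _ ≤ (f '' Tᶜ).ncard + 1 + T.ncard := by
      gcongr
      exact Set.ncard_insert_le _ _
    _ ≤ Tᶜ.ncard + 1 + T.ncard := by
      gcongr
      exact Set.ncard_image_le
    _ = Nat.card α + 1 := by
      rw [← Set.ncard_add_ncard_compl T]
      ring

lemma exists_perm_antitone_comp {n : ℕ} {α : Type*} [LinearOrder α] (f : Fin n → α) :
    ∃ τ : Equiv.Perm (Fin n), Antitone (f ∘ τ) :=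
  ⟨Tuple.sort (OrderDual.toDual ∘ f), Tuple.monotone_sort (OrderDual.toDual ∘ f)⟩

lemma ncard_comp_perm_eq_le_ncard_antitone_comp_perm {n : ℕ} {α : Type*} [LinearOrder α]
    (f : Fin n → α) :
    {σ : Equiv.Perm (Fin n) | ∀ i, f (σ i) = f i}.ncard ≤
      {π : Equiv.Perm (Fin n) | Antitone (f ∘ π)}.ncard := by
  obtain ⟨τ, hτ⟩ := exists_perm_antitone_comp f
  refine Set.ncard_le_ncard_of_injOn (· * τ) (fun σ hσ => ?_) (mul_left_injective τ).injOn
  have comp_eq : f ∘ ⇑(σ * τ) = f ∘ τ := funext fun i => hσ (τ i)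
  rwa [Set.mem_ofPred_eq, comp_eq]

section ThermomajorizationCurve

variable {n : ℕ} {d y : Fin n → ℝ}

lemma th_sum_eq_sum {s : Finset (Fin n)} {k : Fin n} (hk : 0 < d k)
    (hs : ∀ i ∈ s, y k / d k * d i ≤ y i) (hsc : ∀ i ∉ s, y i ≤ y k / d k * d i) :
    th d y (∑ i ∈ s, d i) = ∑ i ∈ s, y i := by
  have sum_eq (r : ℝ) : ∑ i ∈ s, (y i - r * d i) + r * ∑ i ∈ s, d i = ∑ i ∈ s, y i := by
    rw [sum_sub_distrib, mul_sum, sub_add_cancel]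
  refine IsLeast.csInf_eq ⟨⟨k, hk, ?attained⟩, ?lower_bound⟩
  case attained =>
    have sum_max_eq := sum_max_zero_eq_sum (fun i hi => sub_nonneg.2 (hs i hi))
      (fun i hi => sub_nonpos.2 (hsc i hi))
    exact (congrArg (· + y k / d k * ∑ i ∈ s, d i) sum_max_eq).trans (sum_eq _)
  case lower_bound =>
    rintro _ ⟨i, -, rfl⟩
    rw [← sum_eq (y i / d i)]
    exact add_le_add_left (sum_le_sum_max_zero s _) _

lemma psum_eq_sum_map (d : Fin n → ℝ) (σ : Equiv.Perm (Fin n)) (j : ℕ) :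
    psum d σ j = ∑ i ∈ (univ.filter fun i : Fin n => (i : ℕ) < j).map σ.toEmbedding, d i :=
  (sum_map _ σ.toEmbedding d).symm

lemma psum_succ (d : Fin n → ℝ) (σ : Equiv.Perm (Fin n)) (k : Fin n) :
    psum d σ (k + 1) = psum d σ k + d (σ k) := by
  have filter_lt_succ : (univ.filter fun i : Fin n => (i : ℕ) < k + 1) =
      insert k (univ.filter fun i : Fin n => (i : ℕ) < k) := by
    ext i
    simp only [mem_filter_univ, mem_insert, Fin.ext_iff]
    omega
  rw [psum, filter_lt_succ, sum_insert (by simp), add_comm, psum]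

/- Both ends of the `k`-th segment are covered, since the slope at `π k` attains the minimum at
each of them. -/
lemma th_psum_of_antitone (hd : ∀ i, 0 < d i) {π : Equiv.Perm (Fin n)}
    (hπ : Antitone ((y / d) ∘ π)) {k : Fin n} {j : ℕ} (hkj : k ≤ j) (hjk : j ≤ k + 1) :
    th d y (psum d π j) = psum y π j := by
  rw [psum_eq_sum_map, psum_eq_sum_map]
  apply th_sum_eq_sum (hd (π k))
  · intro i hi
    obtain ⟨i, hij, rfl⟩ := mem_map.1 hi
    have hik : i ≤ k := by
      rw [mem_filter_univ] at hij
      omega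
    exact (le_div_iff₀ (hd _)).1 (hπ hik)
  · intro i hi
    obtain ⟨i, rfl⟩ := π.surjective i
    have hki : k ≤ i := by
      simp only [mem_map_equiv, Equiv.symm_apply_apply, mem_filter_univ] at hi
      omega
    exact (div_le_iff₀ (hd _)).1 (hπ hki)

lemma Emap_eq_of_antitone (hd : ∀ i, 0 < d i) {π : Equiv.Perm (Fin n)}
    (hπ : Antitone ((y / d) ∘ π)) : Emap d y π = y := by
  funext i
  obtain ⟨k, rfl⟩ := π.surjective i
  rw [Emap, Equiv.symm_apply_apply, th_psum_of_antitone hd hπ (Nat.le_succ k) le_rfl,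
    th_psum_of_antitone hd hπ le_rfl (Nat.le_succ k), psum_succ, add_sub_cancel_left]

end ThermomajorizationCurve

/-- Upper bound on the number of extreme points in terms of the stabilizer of
the vector y/d under the permutation action. -/
theorem stmt14 (n : ℕ) (hn : 1 ≤ n) (d : Fin n → ℝ) (hd : ∀ i, 0 < d i)
    (y : Fin n → ℝ) :
    (Set.range (Emap d y)).ncard ≤
      Nat.factorial n + 1 -
        {σ : Equiv.Perm (Fin n) | ∀ i, y (σ i) / d (σ i) = y i / d i}.ncard := by
  have stab_le := ncard_comp_perm_eq_le_ncard_antitone_comp_perm (y / d)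
  have range_add_le := ncard_range_add_ncard_le_card_add_one
    (T := {π : Equiv.Perm (Fin n) | Antitone ((y / d) ∘ π)})
    fun _ hπ => Emap_eq_of_antitone hd hπ
  rw [Nat.card_perm, Nat.card_fin] at range_add_le
  exact Nat.le_sub_of_add_le ((Nat.add_le_add_left stab_le _).trans range_add_le)
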